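/- arXiv:2507.14366 — 4 statements merged into one kernel-verified Lean document; each statement's English description precedes it below -/
import Mathlib

section
/- Fix d ≥ 1 and a finite type K, and regard maps K → ℝ^d as elements of the product space (Fin d → ℝ)^K. For f : K → (Fin d → ℝ), define its lexicographic stratum Σ_f to be the set of all g : K → (Fin d → ℝ) such that for all k, l ∈ K and all j : Fin d, the condition "(∀ j' < j, g k j' = g l j') and g k j < g l j" holds for g if and only if the corresponding condition holds for f. Then Σ_f is a convex subset of the real vector space (Fin d → ℝ)^K. -/
/-!
Call `k, l` *tied before `j`* if their images agree in all coordinates `< j`. Two maps in the same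
stratum have the same ties: along a tie of `f`, the three alternatives `f k j < f l j`,
`f k j = f l j`, `f k j > f l j` are distinguished by the stratum conditions for `(k, l)` and
`(l, k)`, so ties propagate from one coordinate to the next. Hence membership in the stratum of
`f` amounts to a system of strict linear inequalities and linear equations indexed by the triples
`(k, l, j)` with `k, l` tied before `j` under the *fixed* map `f` (`mem_lexStratum_iff`), and the
solution set of such a system is convex.
-/

/-- The lexicographic stratum of `f : K → ℝ^d`: the set of maps `g` such that, for every
pair `k, l` of points of `K` and every coordinate `j`, the first `j` coordinates of `g k`
and `g l` agree and the `j`-th coordinates satisfy `g k j < g l j` iff the same holds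
for `f`. -/
def lexStratum {K : Type*} (d : ℕ) (f : K → (Fin d → ℝ)) : Set (K → (Fin d → ℝ)) :=
  {g | ∀ (k l : K) (j : Fin d),
    ((∀ j' < j, g k j' = g l j') ∧ g k j < g l j) ↔
    ((∀ j' < j, f k j' = f l j') ∧ f k j < f l j)}

/-- The stratum of `f` is cut out by strict linear inequalities and linear equations whose index
set depends on `f` only. -/
lemma mem_lexStratum_iff {K : Type*} {d : ℕ} {f g : K → (Fin d → ℝ)} :
    g ∈ lexStratum d f ↔ ∀ (k l : K) (j : Fin d), (∀ j' < j, f k j' = f l j') →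
      (f k j < f l j → g k j < g l j) ∧ (f k j = f l j → g k j = g l j) := by
  constructor
  · intro hg
    -- Equality in coordinate `j` needs the tie of `g` before `j`, hence the induction.
    intro k l j
    induction j using WellFoundedLT.induction with
    | ind j ih =>
      intro hf
      have hgt : ∀ j' < j, g k j' = g l j' := fun j' hj' =>
        (ih j' hj' fun i hi => hf i (hi.trans hj')).2 (hf j' hj')
      refine ⟨fun hlt => ((hg k l j).2 ⟨hf, hlt⟩).2, fun heq => ?_⟩
      rcases lt_trichotomy (g k j) (g l j) with h | h | h
      · exact absurd heq ((hg k l j).1 ⟨hgt, h⟩).2.ne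
      · exact h
      · exact absurd heq ((hg l k j).1 ⟨fun i hi => (hgt i hi).symm, h⟩).2.ne'
  · intro hg k l j
    constructor
    · rintro ⟨hgt, hlt⟩
      have hf : ∀ j' : Fin d, j' < j → f k j' = f l j' := by
        intro j'
        induction j' using WellFoundedLT.induction with
        | ind j' ih =>
          intro hj'
          have ht : ∀ i < j', f k i = f l i := fun i hi => ih i hi (hi.trans hj')
          rcases lt_trichotomy (f k j') (f l j') with h | h | h
          · exact absurd (hgt j' hj') ((hg k l j' ht).1 h).ne
          · exact h
          · exact absurd (hgt j' hj') ((hg l k j' fun i hi => (ht i hi).symm).1 h).ne'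
      refine ⟨hf, ?_⟩
      rcases lt_trichotomy (f k j) (f l j) with h | h | h
      · exact h
      · exact absurd ((hg k l j hf).2 h) hlt.ne
      · exact absurd ((hg l k j fun i hi => (hf i hi).symm).1 h) hlt.asymm
    · rintro ⟨hf, hlt⟩
      exact ⟨fun j' hj' => (hg k l j' fun i hi => hf i (hi.trans hj')).2 (hf j' hj'),
        (hg k l j hf).1 hlt⟩

/-- Each lexicographic stratum in `(ℝ^d)^K` is a convex subset of the real vector space
`(ℝ^d)^K`. -/
theorem convex_lexStratum {K : Type*} [Finite K] (d : ℕ) (hd : 1 ≤ d)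
    (f : K → (Fin d → ℝ)) :
    Convex ℝ (lexStratum d f) := by
  intro g hg h hh a b ha hb hab
  rw [mem_lexStratum_iff] at hg hh ⊢
  intro k l j hf
  obtain ⟨hg₁, hg₂⟩ := hg k l j hf
  obtain ⟨hh₁, hh₂⟩ := hh k l j hf
  simp only [Pi.add_apply, Pi.smul_apply, smul_eq_mul]
  refine ⟨fun hlt => ?_, fun heq => by rw [hg₂ heq, hh₂ heq]⟩
  -- The weights sum to one, so at least one of them is positive.
  rcases ha.eq_or_lt with rfl | ha'
  · obtain rfl : b = 1 := by linarith
    linarith [hh₁ hlt]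
  · exact add_lt_add_of_lt_of_le (mul_lt_mul_of_pos_left (hg₁ hlt) ha')
      (mul_le_mul_of_nonneg_left (hh₁ hlt).le hb)
end

section
/- Fix d ≥ 1, a finite nonempty type K of cardinality n, and an injective map f : K → (Fin d → ℝ). Let Σ_f ⊆ (Fin d → ℝ)^K be the lexicographic stratum of f, i.e. the set of g such that for all k, l ∈ K and all j : Fin d, "(∀ j' < j, g k j' = g l j') and g k j < g l j" holds for g iff it holds for f. For each j with 1 ≤ j ≤ d, let n_j be the cardinality of the image of the map K → (Fin j → ℝ) sending k to the first j coordinates of f k. Then the dimension of Σ_f, namely the finrank over ℝ of the vector span (vectorSpan) of Σ_f, equals n_1 + n_2 + ⋯ + n_d; in particular it satisfies n + (d − 1) ≤ dim Σ_f ≤ d·n. -/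
/-- The map remembering only the first `j` coordinates of `f`. -/
def firstCoords {K : Type*} {d : ℕ} (f : K → (Fin d → ℝ)) (j : ℕ) (h : j ≤ d) :
    K → (Fin j → ℝ) :=
  fun k i => f k (Fin.castLE h i)

/-- The linear map that pulls a family of functions `c j`, each on the set of the first `j + 1`
coordinates of the points `f k` (with `j` counted from `0`), back to `K`; its range is the
direction space of the stratum. -/
def pullCoords {K : Type*} {d : ℕ} (f : K → (Fin d → ℝ)) :
    ((j : Fin d) → Set.range (firstCoords f (j.1 + 1) j.isLt) → ℝ) →ₗ[ℝ] (K → (Fin d → ℝ)) where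
  toFun c k j := c j ⟨firstCoords f (j.1 + 1) j.isLt k, k, rfl⟩
  map_add' _ _ := rfl
  map_smul' _ _ := rfl

theorem pullCoords_injective {K : Type*} {d : ℕ} (f : K → (Fin d → ℝ)) :
    Function.Injective (pullCoords f) := by
  intro c c' h
  funext j x
  obtain ⟨_, k, rfl⟩ := x
  exact congrFun (congrFun h k) j

theorem firstCoords_eq_iff {K : Type*} {d : ℕ} (f : K → (Fin d → ℝ)) (j : Fin d) (k l : K) :
    firstCoords f (j.1 + 1) j.isLt k = firstCoords f (j.1 + 1) j.isLt l ↔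
      ∀ j' ≤ j, f k j' = f l j' := by
  constructor
  · intro h j' hj'
    exact congrFun h ⟨j'.1, Nat.lt_succ_of_le hj'⟩
  · intro h
    funext i
    exact h _ (Nat.le_of_lt_succ i.isLt)

/-- The range consists of the `w` that respect every coincidence of initial coordinates of `f`. -/
theorem mem_range_pullCoords {K : Type*} {d : ℕ} (f w : K → (Fin d → ℝ)) :
    w ∈ LinearMap.range (pullCoords f) ↔
      ∀ (j : Fin d) (k l : K), (∀ j' ≤ j, f k j' = f l j') → w k j = w l j := by
  constructor
  · rintro ⟨c, rfl⟩ j k l h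
    have h' := (firstCoords_eq_iff f j k l).2 h
    simp only [pullCoords, LinearMap.coe_mk, AddHom.coe_mk, h']
  · intro h
    refine ⟨fun j x => w x.2.choose j, ?_⟩
    funext k j
    have hx : ∃ k', firstCoords f (j.1 + 1) j.isLt k' = firstCoords f (j.1 + 1) j.isLt k :=
      ⟨k, rfl⟩
    exact h j _ k ((firstCoords_eq_iff f j _ k).1 hx.choose_spec)

theorem lexStratum_subset {K : Type*} {d : ℕ} (f : K → (Fin d → ℝ)) :
    lexStratum d f ⊆ LinearMap.range (pullCoords f) := by
  intro g hg
  rw [SetLike.mem_coe, mem_range_pullCoords]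
  intro j
  induction j using WellFoundedLT.induction with
  | ind j ih =>
    intro k l h
    have hlt : ∀ j' < j, g k j' = g l j' := fun j' hj' =>
      ih j' hj' k l fun i hi => h i (hi.trans hj'.le)
    rcases lt_trichotomy (g k j) (g l j) with h1 | h1 | h1
    · exact absurd ((hg k l j).1 ⟨hlt, h1⟩).2 (h j le_rfl).not_lt
    · exact h1
    · exact absurd ((hg l k j).1 ⟨fun j' hj' => (hlt j' hj').symm, h1⟩).2 (h j le_rfl).not_gt

/-- Moving `f` slightly in an admissible direction does not leave its stratum. -/
theorem exists_add_smul_mem_lexStratum {K : Type*} [Finite K] {d : ℕ} (f w : K → (Fin d → ℝ))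
    (hw : w ∈ LinearMap.range (pullCoords f)) :
    ∃ ε : ℝ, ε ≠ 0 ∧ f + ε • w ∈ lexStratum d f := by
  rw [mem_range_pullCoords] at hw
  have hev : ∀ᶠ ε in nhds (0 : ℝ), ∀ (k l : K) (j : Fin d), f k j < f l j →
      (f + ε • w) k j < (f + ε • w) l j := by
    simp only [Filter.eventually_all]
    intro k l j h
    have hk : Continuous fun ε : ℝ => f k j + ε * w k j := by fun_prop
    have hl : Continuous fun ε : ℝ => f l j + ε * w l j := by fun_prop
    exact hk.continuousAt.eventually_lt hl.continuousAt (by simpa using h)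
  obtain ⟨ε, hε, hε0⟩ :=
    ((hev.filter_mono nhdsWithin_le_nhds).and (self_mem_nhdsWithin (s := {(0 : ℝ)}ᶜ))).exists
  refine ⟨ε, hε0, fun k l j => ?_⟩
  have heq : ∀ i, (∀ j' ≤ i, f k j' = f l j') → (f + ε • w) k i = (f + ε • w) l i := by
    intro i h
    simp [h i le_rfl, hw i k l h]
  constructor
  · rintro ⟨h1, h2⟩
    have hpre : ∀ j' < j, f k j' = f l j' := by
      intro j' hj'
      rcases lt_trichotomy (f k j') (f l j') with h | h | h
      · exact absurd (h1 j' hj') (hε k l j' h).ne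
      · exact h
      · exact absurd (h1 j' hj') (hε l k j' h).ne'
    refine ⟨hpre, ?_⟩
    rcases lt_trichotomy (f k j) (f l j) with h | h | h
    · exact h
    · refine absurd h2 (heq j fun i hi => ?_).not_lt
      rcases hi.lt_or_eq with hi | rfl
      · exact hpre i hi
      · exact h
    · exact absurd h2 (hε l k j h).not_gt
  · rintro ⟨h1, h2⟩
    exact ⟨fun j' hj' => heq j' fun i hi => h1 i (hi.trans_lt hj'), hε k l j h2⟩

theorem vectorSpan_lexStratum {K : Type*} [Finite K] {d : ℕ} (f : K → (Fin d → ℝ)) :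
    vectorSpan ℝ (lexStratum d f) = LinearMap.range (pullCoords f) := by
  apply le_antisymm
  · rw [vectorSpan, Submodule.span_le]
    rintro _ ⟨x, hx, y, hy, rfl⟩
    exact Submodule.sub_mem _ (lexStratum_subset f hx) (lexStratum_subset f hy)
  · intro w hw
    obtain ⟨ε, hε, hmem⟩ := exists_add_smul_mem_lexStratum f w hw
    have hf : f ∈ lexStratum d f := fun _ _ _ => Iff.rfl
    have h := vsub_mem_vectorSpan ℝ hmem hf
    rw [vsub_eq_sub, add_sub_cancel_left] at h
    exact (Submodule.smul_mem_iff _ hε).1 h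

/-- The dimension of the lexicographic stratum of an injective `f : K → ℝ^d`
(the rank of the vector span of the stratum) equals `n_1 + ⋯ + n_d`, where `n_j` is the
number of distinct points obtained from `f` by remembering only the first `j` coordinates;
in particular it lies between `n + (d - 1)` and `d * n`, where `n = |K|`. -/
theorem finrank_vectorSpan_lexStratum {K : Type*} [Finite K] [Nonempty K] (d : ℕ)
    (hd : 1 ≤ d) (f : K → (Fin d → ℝ)) (hf : Function.Injective f) :
    Module.finrank ℝ (vectorSpan ℝ (lexStratum d f)) =
      ∑ j : Fin d, Nat.card (Set.range (firstCoords f (j.1 + 1) j.isLt)) ∧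
    Nat.card K + (d - 1) ≤ Module.finrank ℝ (vectorSpan ℝ (lexStratum d f)) ∧
    Module.finrank ℝ (vectorSpan ℝ (lexStratum d f)) ≤ d * Nat.card K := by
  have hdim : Module.finrank ℝ (vectorSpan ℝ (lexStratum d f)) =
      ∑ j : Fin d, Nat.card (Set.range (firstCoords f (j.1 + 1) j.isLt)) := by
    have (j : Fin d) : Fintype (Set.range (firstCoords f (j.1 + 1) j.isLt)) := Fintype.ofFinite _
    rw [vectorSpan_lexStratum, LinearMap.finrank_range_of_inj (pullCoords_injective f),
      Module.finrank_pi_fintype]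
    simp [Nat.card_eq_fintype_card]
  refine ⟨hdim, ?_, ?_⟩
  · rw [hdim]
    obtain ⟨m, rfl⟩ : ∃ m, d = m + 1 := ⟨d - 1, by omega⟩
    rw [Fin.sum_univ_castSucc, add_comm]
    refine add_le_add ?_ ?_
    · calc m + 1 - 1 = ∑ _j : Fin m, 1 := by simp
        _ ≤ _ := Finset.sum_le_sum fun j _ => Nat.card_pos
    · -- the first `m + 1` coordinates are the whole point, so this is `hf` by definition
      have hinj : Function.Injective
          (firstCoords f ((Fin.last m).1 + 1) (Fin.last m).isLt) := hf
      exact (Nat.card_range_of_injective hinj).ge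
  · rw [hdim]
    calc _ ≤ ∑ _j : Fin d, Nat.card K :=
          Finset.sum_le_sum fun j _ => Finite.card_range_le _
      _ = d * Nat.card K := by simp
end

section
/- Let G be a group, S ⊆ G a subset, N := Subgroup.normalClosure S its normal closure, and q : G → G/N the quotient homomorphism. Then the kernel of the induced ring homomorphism ℤ[G] → ℤ[G/N] between integral group rings (MonoidAlgebra ℤ G → MonoidAlgebra ℤ (G/N), induced by q on the group variable) equals the two-sided ideal of ℤ[G] generated by the set {s − 1 | s ∈ S}. -/
/-! The elements `s - 1` die in `ℤ[G/N]`, which gives one inclusion. Conversely, let `I` be the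
two-sided ideal they generate. The monoid homomorphism `G → ℤ[G]/I` has a normal kernel containing
`S`, hence containing `N`, so it factors through `G/N`; extending it linearly to `ℤ[G/N]` shows
that the projection `ℤ[G] → ℤ[G]/I` factors through `ℤ[G] → ℤ[G/N]`, and so the kernel of the
latter lies in `I`. -/

/-- Let `N` be the normal closure of a subset `S` of a group `G`. The kernel of the induced
ring homomorphism `ℤ[G] → ℤ[G/N]` between integral group rings is the two-sided ideal of
`ℤ[G]` generated by the elements `s - 1` for `s ∈ S`. -/
theorem ker_mapDomain_quotient_normalClosure {G : Type*} [Group G] (S : Set G) :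
    TwoSidedIdeal.ker
        (MonoidAlgebra.mapDomainRingHom ℤ
          (QuotientGroup.mk' (Subgroup.normalClosure S))) =
      TwoSidedIdeal.span
        {x : MonoidAlgebra ℤ G | ∃ s ∈ S, x = MonoidAlgebra.of ℤ G s - 1} := by
  apply le_antisymm
  · set I := TwoSidedIdeal.span
        {x : MonoidAlgebra ℤ G | ∃ s ∈ S, x = MonoidAlgebra.of ℤ G s - 1} with hI
    let φ : G →* I.ringCon.Quotient :=
      (I.ringCon.mk' : MonoidAlgebra ℤ G →* I.ringCon.Quotient).comp (MonoidAlgebra.of ℤ G)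
    have hφ : Subgroup.normalClosure S ≤ φ.ker := by
      refine Subgroup.normalClosure_le_normal fun s hs => ?_
      have h : MonoidAlgebra.of ℤ G s - 1 ∈ TwoSidedIdeal.ker I.ringCon.mk' := by
        rw [TwoSidedIdeal.ker_ringCon_mk']
        exact TwoSidedIdeal.subset_span ⟨s, hs, rfl⟩
      rw [TwoSidedIdeal.mem_ker, map_sub, map_one, sub_eq_zero] at h
      exact h
    let ψ : MonoidAlgebra ℤ (G ⧸ Subgroup.normalClosure S) →+* I.ringCon.Quotient :=
      MonoidAlgebra.liftNCRingHom (Int.castRingHom _) (QuotientGroup.lift _ φ hφ)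
        fun n _ => Int.cast_commute n _
    have hψ : ψ.comp (MonoidAlgebra.mapDomainRingHom ℤ
        (QuotientGroup.mk' (Subgroup.normalClosure S))) = I.ringCon.mk' := by
      refine MonoidAlgebra.ringHom_ext (fun n => ?_) (fun g => ?_)
      · exact RingHom.congr_fun (RingHom.ext_int
          ((ψ.comp (MonoidAlgebra.mapDomainRingHom ℤ
            (QuotientGroup.mk' (Subgroup.normalClosure S)))).comp
              MonoidAlgebra.singleOneRingHom)
          (I.ringCon.mk'.comp MonoidAlgebra.singleOneRingHom)) n
      · simp [ψ, φ, MonoidAlgebra.liftNCRingHom]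
    intro x hx
    rw [TwoSidedIdeal.mem_ker] at hx
    rw [← TwoSidedIdeal.ker_ringCon_mk' I, TwoSidedIdeal.mem_ker, ← hψ, RingHom.comp_apply, hx,
      map_zero]
  · rw [TwoSidedIdeal.span_le]
    rintro _ ⟨s, hs, rfl⟩
    have h : (s : G ⧸ Subgroup.normalClosure S) = 1 :=
      (QuotientGroup.eq_one_iff s).2 (Subgroup.subset_normalClosure hs)
    rw [SetLike.mem_coe, TwoSidedIdeal.mem_ker, map_sub, map_one, sub_eq_zero]
    simp [h, MonoidAlgebra.one_def]
end

section
/- Let g ≥ 2 and let A := FreeAlgebra ℤ (Fin g ⊕ Fin g) with generators a_i := ι(Sum.inl i), b_i := ι(Sum.inr i), and set μ := Σ_{i} (a_i·b_i − b_i·a_i). Then the element Σ_{i} (a_i·a_1·b_i − b_i·a_1·a_i) (where a_1 is the first a-generator) does NOT lie in the two-sided ideal of A generated by μ. -/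
/-!
It suffices to find a ring homomorphism that kills `μ` but not the insertion. Send `a₁` and `b₂`
to the non-commuting `2 × 2` matrix units `E₁₂` and `E₂₁`, `a₂` to `1`, and every other generator
to `0`. Only the index `i = 2` contributes to either sum: `μ` maps to `[1, E₂₁] = 0`, while the
insertion maps to `[E₁₂, E₂₁] ≠ 0`. In the code the indices are shifted down by one.
-/

open FreeAlgebra

/-- In the free `ℤ`-algebra on generators `a₁, …, a_g, b₁, …, b_g` (with `g ≥ 2`) and with
`μ = Σᵢ (aᵢbᵢ - bᵢaᵢ)`, the "nonadjacent insertion" `Σᵢ (aᵢ·a₁·bᵢ - bᵢ·a₁·aᵢ)` does not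
lie in the two-sided ideal generated by `μ`. -/
theorem insertion_not_mem_ideal_mu (g : ℕ) (hg : 2 ≤ g) :
    letI A := FreeAlgebra ℤ (Fin g ⊕ Fin g)
    letI a : Fin g → A := fun i => ι ℤ (Sum.inl i)
    letI b : Fin g → A := fun i => ι ℤ (Sum.inr i)
    letI μ : A := ∑ i : Fin g, (a i * b i - b i * a i)
    (∑ i : Fin g, (a i * a ⟨0, by omega⟩ * b i - b i * a ⟨0, by omega⟩ * a i)) ∉
      TwoSidedIdeal.span {μ} := by
  intro hmem
  let A := FreeAlgebra ℤ (Fin g ⊕ Fin g)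
  let a : Fin g → A := fun i => ι ℤ (Sum.inl i)
  let b : Fin g → A := fun i => ι ℤ (Sum.inr i)
  let μ : A := ∑ i : Fin g, (a i * b i - b i * a i)
  change (∑ i : Fin g, (a i * a ⟨0, by omega⟩ * b i - b i * a ⟨0, by omega⟩ * a i)) ∈
    TwoSidedIdeal.span {μ} at hmem
  let F : Fin g ⊕ Fin g → Matrix (Fin 2) (Fin 2) ℤ := Sum.elim
    (fun i => if i.val = 0 then !![0, 1; 0, 0] else if i.val = 1 then 1 else 0)
    (fun i => if i.val = 1 then !![0, 0; 1, 0] else 0)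
  let φ : A →ₐ[ℤ] Matrix (Fin 2) (Fin 2) ℤ := FreeAlgebra.lift ℤ F
  have hφ : ∀ x, φ (ι ℤ x) = F x := fun x => FreeAlgebra.lift_ι_apply F x
  have ha0 : φ (a ⟨0, by omega⟩) = !![0, 1; 0, 0] := (hφ _).trans (by simp [F])
  have ha1 : φ (a ⟨1, by omega⟩) = 1 := (hφ _).trans (by simp [F])
  have hb1 : φ (b ⟨1, by omega⟩) = !![0, 0; 1, 0] := (hφ _).trans (by simp [F])
  have hb : ∀ i : Fin g, i ≠ ⟨1, by omega⟩ → φ (b i) = 0 := by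
    intro i hi
    have : i.val ≠ 1 := fun h => hi (Fin.ext h)
    exact (hφ _).trans (by simp [F, this])
  have hμ : φ μ = 0 := by
    simp only [μ, map_sum, map_sub, map_mul]
    rw [Finset.sum_eq_single ⟨1, by omega⟩ (fun i _ hi => by simp [hb i hi]) (by simp), ha1]
    simp
  have hker : TwoSidedIdeal.span {μ} ≤ TwoSidedIdeal.ker φ :=
    TwoSidedIdeal.span_le.mpr (by simpa [TwoSidedIdeal.mem_ker] using hμ)
  have h := (TwoSidedIdeal.mem_ker φ).mp (hker hmem)
  simp only [map_sum, map_sub, map_mul] at h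
  rw [Finset.sum_eq_single ⟨1, by omega⟩ (fun i _ hi => by simp [hb i hi]) (by simp),
    ha0, ha1, hb1] at h
  simpa using congrFun (congrFun h 0) 0
end
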